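/- Define Q : ℕ × ℕ → ℝ by Q_{00} = 2, Q_{i0} = 1 for i ≥ 1, Q_{0j} = 0 for j ≥ 1, and Q_{ij} = \binom{i}{j} + \binom{i-1}{j-1} for i, j ≥ 1. Define operators on sequences ℕ → ℝ by: (T₁ x)_n = ∑_{j=0}^{⌊n/2⌋} Q_{n-j, j} x_j (a finite sum), and (T₋₁ x)_0 = 0, (T₋₁ x)_n = ∑_{k=0}^{n-1} (1/2)^{n-k} x_k for n ≥ 1. Let x : ℕ → ℝ and, for a positive integer m, let z = T_{l_m} ∘ T_{l_{m-1}} ∘ ⋯ ∘ T_{l_1} applied to x, where l_i = (-1)^{i+1} (so the first operator applied is T₁ and the operators alternate). Then: if m is odd, ∑_{k=0}^{n} \binom{n}{k}(-1)^k z_k = z_n for every n; if m is even, ∑_{k=0}^{n} \binom{n}{k}(-1)^k z_k = -z_n for every n. -/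

import Mathlib

/-- The matrix `Q = P + [1, 0ᵀ; 0, P]`. -/
noncomputable def Qmat (i j : ℕ) : ℝ :=
  if j = 0 then (if i = 0 then 2 else 1)
  else if i = 0 then 0
  else (Nat.choose i j : ℝ) + (Nat.choose (i - 1) (j - 1) : ℝ)

/-- Multiplication by the matrix `Q↓`: `(T1 x) n = ∑_{j ≤ ⌊n/2⌋} Q (n-j) j * x j`. -/
noncomputable def T1 (x : ℕ → ℝ) (n : ℕ) : ℝ :=
  ∑ j ∈ Finset.range (n / 2 + 1), Qmat (n - j) j * x j

/-- Multiplication by `(-J(0) J(-2)⁻¹)ᵀ`: `(T₋₁ x) 0 = 0` and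
`(T₋₁ x) n = ∑_{k<n} (1/2)^(n-k) x k` for `n ≥ 1` (the empty sum gives the `n = 0` case). -/
noncomputable def Tneg1 (x : ℕ → ℝ) (n : ℕ) : ℝ :=
  ∑ k ∈ Finset.range n, (1 / 2 : ℝ) ^ (n - k) * x k

/-- `applyT m x = T_{l_m} ∘ ⋯ ∘ T_{l_1} x` where `l_i = (-1)^(i+1)`
(so `T1` is applied first and the operators alternate). -/
noncomputable def applyT : ℕ → (ℕ → ℝ) → (ℕ → ℝ)
  | 0, x => x
  | m + 1, x => (if (m + 1) % 2 = 1 then T1 else Tneg1) (applyT m x)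

/-!
Let `B` be the binomial transform and `S` the shift `(S y) n = y (n + 1)`. Pascal's rule reads
`S B = B - B S`, so `B` commutes with `S ^ 2 - S`. Pascal's rule for `Q` gives
`(S ^ 2 - S) T₁ = T₁ S`; hence `B T₁` and `T₁` satisfy the same second-order recurrence with the
same two initial values, and `B T₁ = T₁`. The recurrence `2 S T₋₁ = T₋₁ + 1` in the same way gives
`B T₋₁ = -T₋₁ B`, so `T₋₁` sends fixed points of `B` into the eigenspace for the eigenvalue `-1`.
-/

/-- The binomial transform of a sequence, in its signed (involutive) version, bundled as a linear
map so that invariance becomes an eigenvalue condition. -/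
def binomialTransform {R : Type*} [CommRing R] : (ℕ → R) →ₗ[R] (ℕ → R) where
  toFun y n := ∑ k ∈ Finset.range (n + 1), (n.choose k : R) * (-1) ^ k * y k
  map_add' y z := by
    ext n
    simp only [Pi.add_apply, mul_add, Finset.sum_add_distrib]
  map_smul' c y := by
    ext n
    simp only [Pi.smul_apply, smul_eq_mul, RingHom.id_apply, Finset.mul_sum, mul_left_comm]

/-- The invariant sequences of the first kind, the property established for the values of `T1`. -/
def IsInvariantSeq {R : Type*} [CommRing R] (y : ℕ → R) : Prop :=
  binomialTransform y = y

/-- The inverse invariant sequences of the first kind, the property `Tneg1` produces from an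
invariant sequence. -/
def IsInverseInvariantSeq {R : Type*} [CommRing R] (y : ℕ → R) : Prop :=
  binomialTransform y = -y

section BinomialTransform

variable {R : Type*} [CommRing R]

lemma binomialTransform_apply (y : ℕ → R) (n : ℕ) :
    binomialTransform y n = ∑ k ∈ Finset.range (n + 1), (n.choose k : R) * (-1) ^ k * y k :=
  rfl

lemma binomialTransform_zero (y : ℕ → R) : binomialTransform y 0 = y 0 := by
  simp [binomialTransform_apply]

lemma binomialTransform_succ (y : ℕ → R) (n : ℕ) :
    binomialTransform y (n + 1) =
      binomialTransform y n - binomialTransform (fun k => y (k + 1)) n := by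
  simp only [binomialTransform_apply, mul_assoc]
  rw [Finset.sum_choose_succ_mul (fun k _ => (-1) ^ k * y k), sub_eq_add_neg,
    ← Finset.sum_neg_distrib]
  simp only [pow_succ, mul_one, neg_mul, mul_neg]

lemma binomialTransform_add_two (y : ℕ → R) (n : ℕ) :
    binomialTransform y (n + 2) =
      binomialTransform y (n + 1) + binomialTransform (fun k => y (k + 2) - y (k + 1)) n := by
  have hsub : binomialTransform (fun k => y (k + 2) - y (k + 1)) n =
      binomialTransform (fun k => y (k + 2)) n - binomialTransform (fun k => y (k + 1)) n :=
    congrFun (map_sub binomialTransform (fun k => y (k + 2)) fun k => y (k + 1)) n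
  rw [binomialTransform_succ y (n + 1), binomialTransform_succ (fun k => y (k + 1)) n, hsub]
  ring

end BinomialTransform

lemma Qmat_succ_succ (i j : ℕ) : Qmat (i + 1) (j + 1) = Qmat i (j + 1) + Qmat i j := by
  rcases i with _ | i <;> rcases j with _ | j
  · norm_num [Qmat]
  · simp [Qmat, Nat.choose_eq_zero_of_lt]
  · simp [Qmat]
  · simp only [Qmat, Nat.choose_succ_succ, Nat.add_one_ne_zero, if_false, Nat.add_sub_cancel,
      Nat.cast_add]
    ring

lemma Qmat_eq_zero_of_lt {i j : ℕ} (h : i < j) : Qmat i j = 0 := by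
  have hj : j ≠ 0 := by omega
  rcases Nat.eq_zero_or_pos i with rfl | hi
  · simp [Qmat, hj]
  · simp [Qmat, hj, hi.ne', Nat.choose_eq_zero_of_lt h,
      Nat.choose_eq_zero_of_lt (show i - 1 < j - 1 by omega)]

lemma T1_eq_sum_antidiagonal (x : ℕ → ℝ) (n : ℕ) :
    T1 x n = ∑ p ∈ Finset.HasAntidiagonal.antidiagonal n, Qmat p.1 p.2 * x p.2 := by
  rw [← Finset.Nat.sum_antidiagonal_swap, Finset.Nat.sum_antidiagonal_eq_sum_range_succ_mk]
  refine Finset.sum_subset (Finset.range_subset_range.2 (by omega)) fun j _ hj => ?_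
  rw [Finset.mem_range] at hj
  simp only [Qmat_eq_zero_of_lt (show n - j < j by omega), zero_mul]

lemma T1_add_two (x : ℕ → ℝ) (n : ℕ) :
    T1 x (n + 2) = T1 x (n + 1) + T1 (fun k => x (k + 1)) n := by
  have hpascal : ∀ p : ℕ × ℕ, Qmat (p.1 + 1) (p.2 + 1) * x (p.2 + 1) =
      Qmat p.1 (p.2 + 1) * x (p.2 + 1) + Qmat p.1 p.2 * x (p.2 + 1) := fun p => by
    rw [Qmat_succ_succ, add_mul]
  have hcol : Qmat (n + 2) 0 = Qmat (n + 1) 0 := by simp [Qmat]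
  simp only [T1_eq_sum_antidiagonal]
  rw [Finset.Nat.sum_antidiagonal_succ', Finset.Nat.sum_antidiagonal_succ,
    Finset.Nat.sum_antidiagonal_succ']
  simp only [hpascal, Finset.sum_add_distrib, hcol,
    Qmat_eq_zero_of_lt (show 0 < n + 1 + 1 by omega)]
  ring

lemma Tneg1_succ (x : ℕ → ℝ) (n : ℕ) : Tneg1 x (n + 1) = 1 / 2 * (Tneg1 x n + x n) := by
  have hterm : ∀ k ∈ Finset.range n,
      (1 / 2 : ℝ) ^ (n + 1 - k) * x k = 1 / 2 * ((1 / 2) ^ (n - k) * x k) := fun k hk => by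
    rw [Nat.succ_sub (Finset.mem_range.1 hk).le, pow_succ', mul_assoc]
  rw [Tneg1, Finset.sum_range_succ, Finset.sum_congr rfl hterm, ← Finset.mul_sum,
    Nat.add_sub_cancel_left, pow_one, ← mul_add, Tneg1]

theorem isInvariantSeq_T1 (x : ℕ → ℝ) : IsInvariantSeq (T1 x) := by
  ext n
  induction n using Nat.twoStepInduction generalizing x with
  | zero => exact binomialTransform_zero _
  | one =>
    have hT1_zero : T1 x 0 = 2 * x 0 := by simp [T1, Qmat]
    have hT1_one : T1 x 1 = x 0 := by simp [T1, Qmat]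
    rw [binomialTransform_succ, binomialTransform_zero, binomialTransform_zero, hT1_zero, hT1_one]
    ring
  | more n ih ih_succ =>
    have hdiff : (fun k => T1 x (k + 2) - T1 x (k + 1)) = T1 fun k => x (k + 1) :=
      funext fun k => sub_eq_of_eq_add' (T1_add_two x k)
    rw [binomialTransform_add_two, hdiff, ih, ih_succ, T1_add_two]

lemma binomialTransform_Tneg1 (x : ℕ → ℝ) :
    binomialTransform (Tneg1 x) = -Tneg1 (binomialTransform x) := by
  ext n
  induction n with
  | zero => simp [binomialTransform_zero, Tneg1]
  | succ n ih =>
    have hshift : (fun k => Tneg1 x (k + 1)) = (1 / 2 : ℝ) • (Tneg1 x + x) :=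
      funext (Tneg1_succ x)
    rw [binomialTransform_succ, hshift, map_smul, map_add]
    simp only [Pi.smul_apply, Pi.add_apply, Pi.neg_apply, smul_eq_mul, ih, Tneg1_succ]
    ring

theorem IsInvariantSeq.isInverseInvariantSeq_Tneg1 {x : ℕ → ℝ} (hx : IsInvariantSeq x) :
    IsInverseInvariantSeq (Tneg1 x) := by
  rw [IsInverseInvariantSeq, binomialTransform_Tneg1, hx]

lemma applyT_succ_of_even (x : ℕ → ℝ) {m : ℕ} (hm : Even m) :
    applyT (m + 1) x = T1 (applyT m x) := by
  rw [applyT, if_pos (Nat.odd_iff.1 hm.add_one)]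

lemma applyT_succ_of_odd (x : ℕ → ℝ) {m : ℕ} (hm : Odd m) :
    applyT (m + 1) x = Tneg1 (applyT m x) := by
  rw [applyT, if_neg (Nat.even_iff.1 hm.add_one ▸ Nat.zero_ne_one)]

theorem isInvariantSeq_applyT_of_odd (x : ℕ → ℝ) {m : ℕ} (hm : Odd m) :
    IsInvariantSeq (applyT m x) := by
  obtain ⟨k, rfl⟩ := hm
  rw [applyT_succ_of_even x (even_two_mul k)]
  exact isInvariantSeq_T1 _

theorem isInverseInvariantSeq_applyT_of_even (x : ℕ → ℝ) {m : ℕ} (hm : Even m) (hm0 : m ≠ 0) :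
    IsInverseInvariantSeq (applyT m x) := by
  obtain ⟨k, rfl⟩ := Nat.exists_eq_add_one_of_ne_zero hm0
  have hk : Odd k := by simpa [Nat.even_add_one] using hm
  rw [applyT_succ_of_odd x hk]
  exact (isInvariantSeq_applyT_of_odd x hk).isInverseInvariantSeq_Tneg1

/-- for `m ≥ 1`, `z = applyT m x` is an invariant sequence of the
first kind when `m` is odd and an inverse invariant sequence of the first kind
when `m` is even. -/
theorem stmt16 (x : ℕ → ℝ) (m : ℕ) (hm : 1 ≤ m) :
    (Odd m → ∀ n, ∑ k ∈ Finset.range (n + 1),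
        (Nat.choose n k : ℝ) * (-1) ^ k * applyT m x k = applyT m x n) ∧
    (Even m → ∀ n, ∑ k ∈ Finset.range (n + 1),
        (Nat.choose n k : ℝ) * (-1) ^ k * applyT m x k = -applyT m x n) :=
  ⟨fun hodd => congrFun (isInvariantSeq_applyT_of_odd x hodd),
    fun heven => congrFun (isInverseInvariantSeq_applyT_of_even x heven
      (Nat.one_le_iff_ne_zero.1 hm))⟩
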